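/- Let W_n be the step graphons of symmetric nonnegative n×n matrices and let W ∈ L¹((0,1)²) be nonnegative and symmetric, with sup_n ‖W_n‖_{L¹} < ∞ and ‖W_n − W‖_□ → 0. On the set Y of Young measures ν with ν_x([−1,1]) = 1 for a.e. x, define F_n(ν) = ∫₀¹∫₀¹ W_n(x,y)|u(x)−u(y)|² dx dy if ν = δ_u for some n-step function u : (0,1) → [−1,1], and F_n(ν) = +∞ otherwise. Then F_n Γ-converges on Y, with respect to narrow convergence of Young measures, to the graphon Dirichlet energy D^W(ν) = ∫₀¹∫₀¹ W(x,y) ∫_ℝ∫_ℝ |λ−μ|² dν_x(λ) dν_y(μ) dx dy. -/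

import Mathlib

open MeasureTheory Filter
open scoped Classical

noncomputable section

/-- The open unit interval `(0,1)` as a subset of `ℝ`. -/
def I01 : Set ℝ := Set.Ioo 0 1

/-- A Young measure on `(0,1)`: a measurable family of Borel probability measures on `ℝ`. -/
def IsYoungMeasure (ν : ℝ → Measure ℝ) : Prop :=
  Measurable ν ∧ ∀ x, IsProbabilityMeasure (ν x)

/-- The Young measure associated with a measurable function `u`: `(δ_u)_x = δ_{u(x)}`. -/
def deltaYM (u : ℝ → ℝ) : ℝ → Measure ℝ := fun x => Measure.dirac (u x)

/-- The type of Young measures `ν` with `ν_x([−1,1]) = 1` for a.e. `x ∈ (0,1)`. -/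
def YMb := {ν : ℝ → Measure ℝ // IsYoungMeasure ν ∧
  ∀ᵐ x ∂(volume.restrict I01), ν x (Set.Icc (-1 : ℝ) 1) = 1}

/-- Narrow convergence of Young measures. -/
def NarrowConv (ν : ℕ → ℝ → Measure ℝ) (μ : ℝ → Measure ℝ) : Prop :=
  ∀ f : ℝ → ℝ, Continuous f → (∃ C, ∀ s, |f s| ≤ C) →
    ∀ g : ℝ → ℝ, IntegrableOn g I01 →
      Tendsto (fun n => ∫ x in I01, g x * ∫ t, f t ∂(ν n x)) atTop
        (nhds (∫ x in I01, g x * ∫ t, f t ∂(μ x)))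

/-- The cut norm of a kernel `V ∈ L¹((0,1)²)`. -/
def cutNorm (V : ℝ → ℝ → ℝ) : ℝ :=
  sSup {r : ℝ | ∃ f g : ℝ → ℝ, Measurable f ∧ Measurable g ∧
    (∀ x, f x ∈ Set.Icc (-1 : ℝ) 1) ∧ (∀ x, g x ∈ Set.Icc (-1 : ℝ) 1) ∧
    r = |∫ x in I01, ∫ y in I01, V x y * f x * g y|}

/-- The index `i` with `x ∈ ((i−1)/n, i/n]`, shifted to start at `0`. -/
def stepIdx (n : ℕ) (x : ℝ) : ℕ := ⌈(n : ℝ) * x⌉₊ - 1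

/-- The step graphon of an `n × n` matrix `A`. -/
def stepGraphon (n : ℕ) (A : Fin n → Fin n → ℝ) (x y : ℝ) : ℝ :=
  if hx : stepIdx n x < n then
    if hy : stepIdx n y < n then A ⟨stepIdx n x, hx⟩ ⟨stepIdx n y, hy⟩ else 0
  else 0

/-- An `n`-step function: constant on each interval `I_i = ((i−1)/n, i/n]`. -/
def IsStepFun (n : ℕ) (u : ℝ → ℝ) : Prop :=
  ∀ i : Fin n, ∀ x ∈ Set.Ioc ((i : ℝ) / n) (((i : ℝ) + 1) / n),
    ∀ y ∈ Set.Ioc ((i : ℝ) / n) (((i : ℝ) + 1) / n), u x = u y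

/-- The graphon Dirichlet energy of a Young measure. -/
def graphonDirichlet (V : ℝ → ℝ → ℝ) (ν : ℝ → Measure ℝ) : ℝ :=
  ∫ x in I01, ∫ y in I01, V x y * ∫ t, (∫ s, |s - t| ^ 2 ∂(ν x)) ∂(ν y)

/-- The graph Dirichlet functional on Young measures: equal to the graph Dirichlet energy of
`u` if `ν = δ_u` for some `n`-step function `u : (0,1) → [−1,1]`, and `+∞` otherwise. -/
def graphDirichletFn (n : ℕ) (Wn : ℝ → ℝ → ℝ) (ν : ℝ → Measure ℝ) : EReal :=
  if h : ∃ u : ℝ → ℝ, IsStepFun n u ∧ Measurable u ∧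
      (∀ x, u x ∈ Set.Icc (-1 : ℝ) 1) ∧ ν = deltaYM u then
    ((∫ x in I01, ∫ y in I01, Wn x y * |h.choose x - h.choose y| ^ 2 : ℝ) : EReal)
  else ⊤

/-- Γ-convergence of functionals with values in `ℝ ∪ {±∞}`. -/
def GammaConv {X : Type*} (conv : (ℕ → X) → X → Prop)
    (F : ℕ → X → EReal) (Flim : X → EReal) : Prop :=
  (∀ (xs : ℕ → X) (x : X), conv xs x →
      Flim x ≤ Filter.liminf (fun n => F n (xs n)) Filter.atTop) ∧
  (∀ x : X, ∃ xs : ℕ → X, conv xs x ∧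
      Filter.limsup (fun n => F n (xs n)) Filter.atTop ≤ Flim x)

/-! ### Basic facts -/

abbrev mu01 : Measure ℝ := volume.restrict I01

lemma volume_I01 : volume I01 = 1 := by simp [I01]

instance instProbMu01 : IsProbabilityMeasure mu01 := ⟨by simp [volume_I01]⟩

/-- measurable and bounded by one -/
def B1 (p : ℝ → ℝ) : Prop := Measurable p ∧ ∀ x, |p x| ≤ 1

lemma B1.one : B1 (fun _ => 1) := ⟨measurable_const, by simp⟩

lemma B1.integrable {p : ℝ → ℝ} (hp : B1 p) : Integrable p mu01 :=
  Integrable.of_bound hp.1.aestronglyMeasurable 1 (ae_of_all _ hp.2)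

lemma B1.integrable_mul {p g : ℝ → ℝ} (hp : B1 p) (hg : Integrable g mu01) :
    Integrable (fun x => g x * p x) mu01 :=
  hg.mul_bdd hp.1.aestronglyMeasurable (ae_of_all _ hp.2)

def Bil (V : ℝ → ℝ → ℝ) (p q : ℝ → ℝ) : ℝ := ∫ x in I01, ∫ y in I01, V x y * p x * q y

lemma bil_integrable {V : ℝ → ℝ → ℝ} (hV : Integrable (Function.uncurry V) (mu01.prod mu01))
    {p q : ℝ → ℝ} (hp : B1 p) (hq : B1 q) :
    Integrable (fun z : ℝ × ℝ => V z.1 z.2 * p z.1 * q z.2) (mu01.prod mu01) := by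
  have h1 : Integrable (fun z : ℝ × ℝ => V z.1 z.2 * p z.1) (mu01.prod mu01) :=
    Integrable.mul_bdd (c := 1) hV (hp.1.comp measurable_fst).aestronglyMeasurable
      (ae_of_all _ fun z => hp.2 z.1)
  exact Integrable.mul_bdd (c := 1) h1 (hq.1.comp measurable_snd).aestronglyMeasurable
      (ae_of_all _ fun z => hq.2 z.2)

lemma bil_eq {V : ℝ → ℝ → ℝ} (hV : Integrable (Function.uncurry V) (mu01.prod mu01))
    {p q : ℝ → ℝ} (hp : B1 p) (hq : B1 q) :
    Bil V p q = ∫ z, V z.1 z.2 * p z.1 * q z.2 ∂(mu01.prod mu01) :=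
  (integral_prod _ (bil_integrable hV hp hq)).symm

lemma bil_le_cutNorm {V : ℝ → ℝ → ℝ} (hV : Integrable (Function.uncurry V) (mu01.prod mu01))
    {p q : ℝ → ℝ} (hp : B1 p) (hq : B1 q) : |Bil V p q| ≤ cutNorm V := by
  unfold cutNorm
  refine le_csSup ⟨∫ z, |V z.1 z.2| ∂(mu01.prod mu01), ?_⟩
    ⟨p, q, hp.1, hq.1, fun x => abs_le.1 (hp.2 x), fun x => abs_le.1 (hq.2 x), rfl⟩
  rintro r ⟨f, g, hf, hg, hf1, hg1, rfl⟩
  have hf' : B1 f := ⟨hf, fun x => abs_le.2 (hf1 x)⟩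
  have hg' : B1 g := ⟨hg, fun x => abs_le.2 (hg1 x)⟩
  have := bil_eq hV hf' hg'
  unfold Bil at this
  rw [this]
  refine (abs_integral_le_integral_abs).trans ?_
  refine integral_mono (bil_integrable hV hf' hg').abs hV.abs fun z => ?_
  simp only [abs_mul]
  calc |V z.1 z.2| * |f z.1| * |g z.2| ≤ |V z.1 z.2| * 1 * 1 := by
        gcongr
        · exact hf'.2 _
        · exact hg'.2 _
    _ = _ := by simp

lemma integrable_sub2 {V U : ℝ → ℝ → ℝ}
    (hV : Integrable (Function.uncurry V) (mu01.prod mu01))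
    (hU : Integrable (Function.uncurry U) (mu01.prod mu01)) :
    Integrable (Function.uncurry (fun x y => V x y - U x y)) (mu01.prod mu01) := hV.sub hU

lemma bil_sub {V U : ℝ → ℝ → ℝ} (hV : Integrable (Function.uncurry V) (mu01.prod mu01))
    (hU : Integrable (Function.uncurry U) (mu01.prod mu01))
    {p q : ℝ → ℝ} (hp : B1 p) (hq : B1 q) :
    Bil (fun x y => V x y - U x y) p q = Bil V p q - Bil U p q := by
  rw [bil_eq hV hp hq, bil_eq hU hp hq, bil_eq (integrable_sub2 hV hU) hp hq,
    ← integral_sub (bil_integrable hV hp hq) (bil_integrable hU hp hq)]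
  congr 1; ext z; ring

/-- the quadratic combination -/
def Quad (V : ℝ → ℝ → ℝ) (p q : ℝ → ℝ) : ℝ :=
  Bil V q (fun _ => 1) + Bil V (fun _ => 1) q - 2 * Bil V p p

lemma quad_eq {V : ℝ → ℝ → ℝ} (hV : Integrable (Function.uncurry V) (mu01.prod mu01))
    {p q : ℝ → ℝ} (hp : B1 p) (hq : B1 q) :
    Quad V p q = ∫ x in I01, ∫ y in I01, V x y * (q x + q y - 2 * p x * p y) := by
  have i1 := bil_integrable hV hq B1.one
  have i2 := bil_integrable hV B1.one hq
  have i3 := bil_integrable hV hp hp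
  have i12 : Integrable (fun z : ℝ × ℝ => V z.1 z.2 * q z.1 * 1 + V z.1 z.2 * 1 * q z.2)
    (mu01.prod mu01) := i1.add i2
  unfold Quad
  rw [bil_eq hV hq B1.one, bil_eq hV B1.one hq, bil_eq hV hp hp, ← integral_const_mul,
    ← integral_add i1 i2, ← integral_sub i12 (i3.const_mul 2)]
  refine (integral_prod _ (i12.sub (i3.const_mul 2))).trans ?_
  congr 1; ext x; congr 1; ext y; simp only [Pi.sub_apply]; ring

lemma quad_sub_le {V U : ℝ → ℝ → ℝ} (hV : Integrable (Function.uncurry V) (mu01.prod mu01))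
    (hU : Integrable (Function.uncurry U) (mu01.prod mu01))
    {p q : ℝ → ℝ} (hp : B1 p) (hq : B1 q) :
    |Quad V p q - Quad U p q| ≤ 4 * cutNorm (fun x y => V x y - U x y) := by
  have h1 := bil_le_cutNorm (integrable_sub2 hV hU) hq B1.one
  have h2 := bil_le_cutNorm (integrable_sub2 hV hU) B1.one hq
  have h3 := bil_le_cutNorm (integrable_sub2 hV hU) hp hp
  rw [bil_sub hV hU hq B1.one] at h1
  rw [bil_sub hV hU B1.one hq] at h2
  rw [bil_sub hV hU hp hp] at h3
  unfold Quad
  rw [abs_le] at *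
  constructor <;> linarith

/-- Weak-star convergence in both factors passes to the limit in the bilinear form. -/
lemma bil_tendsto {V : ℝ → ℝ → ℝ} (_hVm : Measurable (Function.uncurry V))
    (hV : Integrable (Function.uncurry V) (mu01.prod mu01))
    {p q : ℝ → ℝ} {ps qs : ℕ → ℝ → ℝ} (hp : B1 p) (hq : B1 q) (hps : ∀ n, B1 (ps n))
    (hqs : ∀ n, B1 (qs n))
    (hpl : ∀ g : ℝ → ℝ, Integrable g mu01 →
      Tendsto (fun n => ∫ x in I01, g x * ps n x) atTop (nhds (∫ x in I01, g x * p x)))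
    (hql : ∀ g : ℝ → ℝ, Integrable g mu01 →
      Tendsto (fun n => ∫ x in I01, g x * qs n x) atTop (nhds (∫ x in I01, g x * q x))) :
    Tendsto (fun n => Bil V (ps n) (qs n)) atTop (nhds (Bil V p q)) := by
  -- the operator `T`
  let T : (ℝ → ℝ) → ℝ → ℝ := fun r x => ∫ y in I01, V x y * r y
  have hint : ∀ r, B1 r → Integrable (T r) mu01 := by
    intro r hr
    have := (bil_integrable hV B1.one hr).integral_prod_left
    simpa [T] using this
  have hbil : ∀ r s, Bil V r s = ∫ x in I01, T s x * r x := by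
    intro r s
    unfold Bil
    congr 1; ext x
    simp only [T]
    rw [← integral_mul_const]
    congr 1; ext y; ring
  have hdom : Integrable (fun x => ∫ y in I01, |V x y|) mu01 := hV.abs.integral_prod_left
  have hsec : ∀ᵐ x ∂mu01, Integrable (fun y => V x y) mu01 := hV.prod_right_ae
  have hTle : ∀ r, B1 r → ∀ᵐ x ∂mu01, |T r x| ≤ ∫ y in I01, |V x y| := by
    intro r hr
    filter_upwards [hsec] with x hx
    refine abs_integral_le_integral_abs.trans ?_
    refine integral_mono (hr.integrable_mul hx).abs hx.abs fun y => ?_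
    simp only [abs_mul]
    exact mul_le_of_le_one_right (abs_nonneg _) (hr.2 y)
  -- L1 convergence
  have hL1 : Tendsto (fun n => ∫ x in I01, |T (qs n) x - T q x|) atTop (nhds 0) := by
    have := tendsto_integral_of_dominated_convergence (μ := mu01)
      (F := fun n x => |T (qs n) x - T q x|) (f := fun _ => (0:ℝ))
      (fun x => 2 * ∫ y in I01, |V x y|)
      (fun n => ((hint _ (hqs n)).sub (hint _ hq)).abs.aestronglyMeasurable)
      (hdom.const_mul 2)
      (fun n => by
        filter_upwards [hTle _ (hqs n), hTle _ hq] with x h1 h2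
        rw [Real.norm_eq_abs, abs_abs]
        calc _ ≤ |T (qs n) x| + |T q x| := abs_sub _ _
          _ ≤ _ := by linarith)
      (by
        filter_upwards [hsec] with x hx
        have h := hql _ hx
        have h2 : Tendsto (fun n => T (qs n) x - T q x) atTop (nhds (T q x - T q x)) :=
          h.sub_const _
        rw [sub_self] at h2
        simpa using h2.abs)
    simpa using this
  have hA : Tendsto (fun n => ∫ x in I01, (T (qs n) x - T q x) * ps n x) atTop (nhds 0) := by
    refine squeeze_zero_norm (fun n => ?_) hL1
    refine abs_integral_le_integral_abs.trans ?_
    have hi := (hint _ (hqs n)).sub (hint _ hq)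
    refine integral_mono ((hps n).integrable_mul hi).abs hi.abs fun x => ?_
    simp only [abs_mul]
    exact mul_le_of_le_one_right (abs_nonneg _) ((hps n).2 x)
  have hB := hpl _ (hint q hq)
  have := hA.add hB
  rw [zero_add, ← hbil] at this
  refine this.congr fun n => ?_
  have hd : Integrable (fun x => T (qs n) x - T q x) mu01 := (hint _ (hqs n)).sub (hint _ hq)
  rw [hbil, ← integral_add ((hps n).integrable_mul hd)
    ((hps n).integrable_mul (hint _ hq))]
  congr 1; ext x; ring

lemma quad_tendsto {V : ℝ → ℝ → ℝ} (_hVm : Measurable (Function.uncurry V))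
    (hV : Integrable (Function.uncurry V) (mu01.prod mu01))
    {p q : ℝ → ℝ} {ps qs : ℕ → ℝ → ℝ} (hp : B1 p) (hq : B1 q) (hps : ∀ n, B1 (ps n))
    (hqs : ∀ n, B1 (qs n))
    (hpl : ∀ g : ℝ → ℝ, Integrable g mu01 →
      Tendsto (fun n => ∫ x in I01, g x * ps n x) atTop (nhds (∫ x in I01, g x * p x)))
    (hql : ∀ g : ℝ → ℝ, Integrable g mu01 →
      Tendsto (fun n => ∫ x in I01, g x * qs n x) atTop (nhds (∫ x in I01, g x * q x))) :
    Tendsto (fun n => Quad V (ps n) (qs n)) atTop (nhds (Quad V p q)) := by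
  unfold Quad
  exact ((bil_tendsto _hVm hV hq B1.one hqs (fun _ => B1.one) hql
      (fun g _ => tendsto_const_nhds)).add
    (bil_tendsto _hVm hV B1.one hq (fun _ => B1.one) hqs (fun g _ => tendsto_const_nhds) hql)).sub
    ((bil_tendsto _hVm hV hp hp hps hps hpl hpl).const_mul 2)

/-! ### Clipping and moments -/

def clip (t : ℝ) : ℝ := max (-1) (min 1 t)

lemma clip_cont : Continuous clip := by unfold clip; fun_prop

lemma clip_mem (t : ℝ) : clip t ∈ Set.Icc (-1 : ℝ) 1 := by
  unfold clip; constructor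
  · exact le_max_left _ _
  · exact max_le (by norm_num) (min_le_left _ _)

lemma clip_eq {t : ℝ} (ht : t ∈ Set.Icc (-1 : ℝ) 1) : clip t = t := by
  unfold clip; rw [min_eq_right ht.2, max_eq_right ht.1]

lemma abs_pow_le_of_mem {t : ℝ} (ht : t ∈ Set.Icc (-1 : ℝ) 1) (k : ℕ) : |t ^ k| ≤ 1 := by
  rw [abs_pow]; exact pow_le_one₀ (abs_nonneg _) (abs_le.2 ht)

def mom (ν : ℝ → Measure ℝ) (k : ℕ) (x : ℝ) : ℝ := ∫ t, clip t ^ k ∂(ν x)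

lemma clip_integrable (m : Measure ℝ) [IsProbabilityMeasure m] {f : ℝ → ℝ} (hf : Continuous f) :
    Integrable (fun t => f (clip t)) m := by
  obtain ⟨C, hC⟩ := isCompact_Icc.exists_bound_of_continuousOn (s := Set.Icc (-1:ℝ) 1)
    hf.continuousOn
  exact Integrable.of_bound (hf.comp clip_cont).aestronglyMeasurable C
    (ae_of_all _ fun t => hC _ (clip_mem t))

lemma measurable_int {ν : ℝ → Measure ℝ} (hν : IsYoungMeasure ν) {f : ℝ → ℝ}
    (hf : Continuous f) : Measurable (fun x => ∫ t, f t ∂(ν x)) := by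
  let κ : ProbabilityTheory.Kernel ℝ ℝ := ⟨ν, hν.1⟩
  have := MeasureTheory.StronglyMeasurable.integral_kernel (κ := κ) (f := f) hf.stronglyMeasurable
  exact this.measurable

lemma mom_B1 {ν : ℝ → Measure ℝ} (hν : IsYoungMeasure ν) (k : ℕ) : B1 (mom ν k) := by
  refine ⟨measurable_int hν (clip_cont.pow k), fun x => ?_⟩
  have := hν.2 x
  have h := norm_integral_le_of_norm_le_const (μ := ν x) (f := fun t => clip t ^ k) (C := 1)
    (ae_of_all _ fun t => abs_pow_le_of_mem (clip_mem t) k)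
  simpa [mom] using h

lemma ae_clip {m : Measure ℝ} [IsProbabilityMeasure m] (h : m (Set.Icc (-1 : ℝ) 1) = 1) :
    ∀ᵐ t ∂m, clip t = t := by
  have : ∀ᵐ t ∂m, t ∈ Set.Icc (-1 : ℝ) 1 := by
    rw [← prob_compl_eq_zero_iff measurableSet_Icc] at h
    exact h
  filter_upwards [this] with t ht using clip_eq ht

lemma inner_energy {m m' : Measure ℝ} [IsProbabilityMeasure m] [IsProbabilityMeasure m']
    (h : m (Set.Icc (-1 : ℝ) 1) = 1) (h' : m' (Set.Icc (-1 : ℝ) 1) = 1) :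
    ∫ t, (∫ s, |s - t| ^ 2 ∂m) ∂m' =
      (∫ s, clip s ^ 2 ∂m) + (∫ s, clip s ^ 2 ∂m') -
        2 * (∫ s, clip s ^ 1 ∂m) * (∫ s, clip s ^ 1 ∂m') := by
  have hi : ∀ (m : Measure ℝ) [IsProbabilityMeasure m] (k : ℕ),
      Integrable (fun t => clip t ^ k) m := fun m _ k => clip_integrable m (continuous_pow k)
  have e1 : ∀ t, (∫ s, |s - t| ^ 2 ∂m) =
      (∫ s, clip s ^ 2 ∂m) + t ^ 2 - 2 * (∫ s, clip s ^ 1 ∂m) * t := by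
    intro t
    have : (∫ s, |s - t| ^ 2 ∂m) = ∫ s, (clip s ^ 2 + t ^ 2 - clip s ^ 1 * (2 * t)) ∂m := by
      refine integral_congr_ae ?_
      filter_upwards [ae_clip h] with s hs
      rw [hs, sq_abs]; ring
    have j : Integrable (fun s => clip s ^ 2 + t ^ 2) m := (hi m 2).add (integrable_const _)
    rw [this, integral_sub j ((hi m 1).mul_const _),
      integral_add (hi m 2) (integrable_const _), integral_mul_const]
    simp; ring
  simp_rw [e1]
  set a := ∫ s, clip s ^ 2 ∂m
  set b := ∫ s, clip s ^ 1 ∂m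
  have : (∫ t, (a + t ^ 2 - 2 * b * t) ∂m') =
      ∫ t, (a + clip t ^ 2 - 2 * b * clip t ^ 1) ∂m' := by
    refine integral_congr_ae ?_
    filter_upwards [ae_clip h'] with s hs
    rw [hs]; ring
  have j : Integrable (fun s => a + clip s ^ 2) m' := (integrable_const _).add (hi m' 2)
  rw [this, integral_sub j ((hi m' 1).const_mul _),
      integral_add (integrable_const _) (hi m' 2), integral_const_mul]
  simp

lemma dirichlet_eq {V : ℝ → ℝ → ℝ} (hV : Integrable (Function.uncurry V) (mu01.prod mu01))
    (ν : YMb) : graphonDirichlet V ν.1 = Quad V (mom ν.1 1) (mom ν.1 2) := by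
  obtain ⟨ν, hν, hs⟩ := ν
  rw [quad_eq hV (mom_B1 hν 1) (mom_B1 hν 2)]
  unfold graphonDirichlet
  refine integral_congr_ae ?_
  filter_upwards [hs] with x hx
  refine integral_congr_ae ?_
  filter_upwards [hs] with y hy
  have := hν.2 x
  have := hν.2 y
  rw [inner_energy hx hy]
  rfl

/-! ### Step graphons -/

lemma measurable_stepIdx (n : ℕ) : Measurable (stepIdx n) := by
  unfold stepIdx
  have h1 : Measurable (fun x : ℝ => ⌈(n : ℝ) * x⌉₊) :=
    Nat.measurable_ceil.comp (measurable_const.mul measurable_id)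
  exact (measurable_from_top (f := fun k : ℕ => k - 1)).comp h1

lemma stepGraphon_measurable (n : ℕ) (A : Fin n → Fin n → ℝ) :
    Measurable (Function.uncurry (stepGraphon n A)) := by
  let B : ℕ × ℕ → ℝ := fun z => if hx : z.1 < n then
    if hy : z.2 < n then A ⟨z.1, hx⟩ ⟨z.2, hy⟩ else 0 else 0
  have hB : Measurable B := measurable_of_countable B
  exact hB.comp (((measurable_stepIdx n).comp measurable_fst).prodMk
    ((measurable_stepIdx n).comp measurable_snd))

lemma stepGraphon_integrable (n : ℕ) (A : Fin n → Fin n → ℝ) :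
    Integrable (Function.uncurry (stepGraphon n A)) (mu01.prod mu01) := by
  refine Integrable.of_bound (stepGraphon_measurable n A).aestronglyMeasurable
    (∑ i, ∑ j, |A i j|) (ae_of_all _ fun z => ?_)
  have h0 : (0:ℝ) ≤ ∑ i, ∑ j, |A i j| :=
    Finset.sum_nonneg fun i _ => Finset.sum_nonneg fun j _ => abs_nonneg _
  simp only [Function.uncurry, stepGraphon, Real.norm_eq_abs]
  split_ifs with h1 h2
  · refine le_trans ?_ (Finset.single_le_sum (f := fun i => ∑ j, |A i j|)
      (fun i _ => Finset.sum_nonneg fun j _ => abs_nonneg _) (Finset.mem_univ (⟨stepIdx n z.1, h1⟩ : Fin n)))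
    exact Finset.single_le_sum (f := fun j : Fin n => |A ⟨stepIdx n z.1, h1⟩ j|)
      (fun i _ => abs_nonneg _) (Finset.mem_univ (⟨stepIdx n z.2, h2⟩ : Fin n))
  · simpa using h0
  · simpa using h0

lemma deltaYM_young {u : ℝ → ℝ} (hu : Measurable u) : IsYoungMeasure (deltaYM u) :=
  ⟨Measure.measurable_dirac.comp hu, fun x => by unfold deltaYM; infer_instance⟩

lemma deltaYM_inj {u v : ℝ → ℝ} (h : deltaYM u = deltaYM v) : u = v := by
  ext x
  by_contra hne
  exact dirac_ne_dirac hne (congrFun h x)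

lemma mom_delta {u : ℝ → ℝ} (hu1 : ∀ x, u x ∈ Set.Icc (-1 : ℝ) 1) (k : ℕ) :
    mom (deltaYM u) k = fun x => u x ^ k := by
  ext x
  simp [mom, deltaYM, clip_eq (hu1 x)]

/-- The graph Dirichlet functional on its domain. -/
lemma graphDirichletFn_delta {n : ℕ} {V : ℝ → ℝ → ℝ}
    (hV : Integrable (Function.uncurry V) (mu01.prod mu01)) {u : ℝ → ℝ}
    (hs : IsStepFun n u) (hu : Measurable u) (hu1 : ∀ x, u x ∈ Set.Icc (-1 : ℝ) 1) :
    graphDirichletFn n V (deltaYM u) =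
      ((Quad V (mom (deltaYM u) 1) (mom (deltaYM u) 2) : ℝ) : EReal) := by
  have h : ∃ v : ℝ → ℝ, IsStepFun n v ∧ Measurable v ∧
      (∀ x, v x ∈ Set.Icc (-1 : ℝ) 1) ∧ deltaYM u = deltaYM v := ⟨u, hs, hu, hu1, rfl⟩
  unfold graphDirichletFn
  rw [dif_pos h]
  have hc : h.choose = u := (deltaYM_inj h.choose_spec.2.2.2).symm
  rw [hc, quad_eq hV (mom_B1 (deltaYM_young hu) 1) (mom_B1 (deltaYM_young hu) 2),
    mom_delta hu1, mom_delta hu1]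
  congr 1
  congr 1; ext x; congr 1; ext y
  rw [sq_abs]; ring

/-! ### Greedy construction of the recovery sequence -/

lemma greedy (K : ℕ) (M : ℕ → ℕ → ℝ) (hM : ∀ i k, |M i k| ≤ 1)
    (hex : ∀ (i : ℕ) (a : ℕ → ℝ), ∃ t ∈ Set.Icc (-1 : ℝ) 1,
      ∑ k ∈ Finset.range K, a k * t ^ k ≤ ∑ k ∈ Finset.range K, a k * M i k) :
    ∃ t : ℕ → ℝ, (∀ i, t i ∈ Set.Icc (-1 : ℝ) 1) ∧
      ∀ p : ℕ, ∑ k ∈ Finset.range K, (1 / 2 : ℝ) ^ k *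
        (∑ i ∈ Finset.range p, (t i ^ k - M i k)) ^ 2 ≤ 8 * p := by
  choose T hT1 hT2 using hex
  let S : ℕ → ℕ → ℝ := fun p => Nat.rec (fun _ => 0)
    (fun p s k => s k + (T p (fun k => (1 / 2) ^ k * s k) ^ k - M p k)) p
  let t : ℕ → ℝ := fun p => T p (fun k => (1 / 2) ^ k * S p k)
  have hS : ∀ p k, S (p + 1) k = S p k + (t p ^ k - M p k) := fun p k => rfl
  have hSsum : ∀ p k, ∑ i ∈ Finset.range p, (t i ^ k - M i k) = S p k := by
    intro p k
    induction p with
    | zero => rfl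
    | succ p ih => rw [Finset.sum_range_succ, ih, hS]
  refine ⟨t, fun i => hT1 _ _, fun p => ?_⟩
  simp_rw [hSsum]
  induction p with
  | zero =>
    have : ∀ k, S 0 k = 0 := fun k => rfl
    simp [this]
  | succ p ih =>
    have h1 : ∑ k ∈ Finset.range K, (1 / 2 : ℝ) ^ k * S (p + 1) k ^ 2 =
        ∑ k ∈ Finset.range K, (1 / 2 : ℝ) ^ k * S p k ^ 2 +
        2 * (∑ k ∈ Finset.range K, ((1 / 2 : ℝ) ^ k * S p k) * t p ^ k -
          ∑ k ∈ Finset.range K, ((1 / 2 : ℝ) ^ k * S p k) * M p k) +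
        ∑ k ∈ Finset.range K, (1 / 2 : ℝ) ^ k * (t p ^ k - M p k) ^ 2 := by
      rw [← Finset.sum_sub_distrib, Finset.mul_sum, ← Finset.sum_add_distrib,
        ← Finset.sum_add_distrib]
      refine Finset.sum_congr rfl fun k _ => ?_
      rw [hS]; ring
    have h2 : ∑ k ∈ Finset.range K, ((1 / 2 : ℝ) ^ k * S p k) * t p ^ k ≤
        ∑ k ∈ Finset.range K, ((1 / 2 : ℝ) ^ k * S p k) * M p k :=
      hT2 p (fun k => (1 / 2) ^ k * S p k)
    have h3 : ∑ k ∈ Finset.range K, (1 / 2 : ℝ) ^ k * (t p ^ k - M p k) ^ 2 ≤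
        ∑ k ∈ Finset.range K, (1 / 2 : ℝ) ^ k * 4 := by
      refine Finset.sum_le_sum fun k _ => ?_
      gcongr
      have a1 := abs_le.1 (abs_pow_le_of_mem (hT1 p (fun k => (1 / 2) ^ k * S p k)) k)
      have a2 := abs_le.1 (hM p k)
      change -1 ≤ t p ^ k ∧ t p ^ k ≤ 1 at a1
      nlinarith
    have h4 : ∑ k ∈ Finset.range K, (1 / 2 : ℝ) ^ k ≤ 2 := sum_geometric_two_le K
    rw [← Finset.sum_mul] at h3
    push_cast
    linarith

lemma stepIdx_eq {n : ℕ} (hn : 0 < n) (i : ℕ) {x : ℝ}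
    (hx : x ∈ Set.Ioc ((i : ℝ) / n) (((i : ℝ) + 1) / n)) : stepIdx n x = i := by
  have hn' : (0 : ℝ) < n := by exact_mod_cast hn
  have h1 : (i : ℝ) < n * x := by
    have := (div_lt_iff₀ hn').1 hx.1; linarith
  have h2 : n * x ≤ (i : ℝ) + 1 := by
    have := (le_div_iff₀ hn').1 hx.2; linarith
  have : ⌈(n : ℝ) * x⌉₊ = i + 1 := by
    rw [Nat.ceil_eq_iff (by omega)]
    constructor
    · simpa using h1
    · push_cast; exact h2
  simp [stepIdx, this]

lemma bdd_intervalIntegrable {h : ℝ → ℝ} (hm : Measurable h) {C : ℝ} (hb : ∀ x, |h x| ≤ C)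
    (a b : ℝ) : IntervalIntegrable h volume a b := by
  constructor <;>
  exact Measure.integrableOn_of_bounded (M := C) (by simp) hm.aestronglyMeasurable
    (ae_of_all _ hb)

lemma segment_bound {n : ℕ} (hn : 0 < n) {u m : ℝ → ℝ} (hm : B1 m) (hu : B1 u) (c : ℕ → ℝ)
    (huc : ∀ (i : ℕ), ∀ x ∈ Set.Ioc ((i : ℝ) / n) (((i : ℝ) + 1) / n), u x = c i)
    {q : ℝ} (hq : 0 ≤ q) :
    |∫ x in (0 : ℝ)..q, (u x - m x)| ≤
      |∑ i ∈ Finset.range ⌊n * q⌋₊,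
        (c i - n * ∫ x in ((i : ℝ) / n)..(((i : ℝ) + 1) / n), m x)| / n + 2 / n := by
  have hn' : (0 : ℝ) < n := by exact_mod_cast hn
  set p := ⌊n * q⌋₊
  have hhm : Measurable (fun x => u x - m x) := hu.1.sub hm.1
  have hhb : ∀ x, |u x - m x| ≤ 2 := fun x => by
    have := abs_sub (u x) (m x); have := hu.2 x; have := hm.2 x; linarith
  have hi := bdd_intervalIntegrable hhm hhb
  have hmi := bdd_intervalIntegrable hm.1 hm.2
  have e1 : ∫ x in (0 : ℝ)..((p : ℝ) / n), (u x - m x) =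
      ∑ i ∈ Finset.range p, ∫ x in ((i : ℝ) / n)..(((i : ℝ) + 1) / n), (u x - m x) := by
    have := intervalIntegral.sum_integral_adjacent_intervals (f := fun x => u x - m x)
      (μ := volume) (a := fun i : ℕ => (i : ℝ) / n) (n := p) (fun k _ => hi _ _)
    simp only [Nat.cast_zero, zero_div, Nat.cast_add, Nat.cast_one] at this
    exact this.symm
  have e2 : ∀ i : ℕ, ∫ x in ((i : ℝ) / n)..(((i : ℝ) + 1) / n), (u x - m x) =
      (c i - n * ∫ x in ((i : ℝ) / n)..(((i : ℝ) + 1) / n), m x) / n := by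
    intro i
    have hle : (i : ℝ) / n ≤ ((i : ℝ) + 1) / n := by gcongr; linarith
    have : ∫ x in ((i : ℝ) / n)..(((i : ℝ) + 1) / n), (u x - m x) =
        ∫ x in ((i : ℝ) / n)..(((i : ℝ) + 1) / n), (c i - m x) := by
      refine intervalIntegral.integral_congr_ae (ae_of_all _ fun x hx => ?_)
      rw [Set.uIoc_of_le hle] at hx
      rw [huc i x hx]
    rw [this, intervalIntegral.integral_sub (by simp) (hmi _ _)]
    simp only [intervalIntegral.integral_const, smul_eq_mul]
    field_simp
    ring
  have e3 : |∫ x in ((p : ℝ) / n)..q, (u x - m x)| ≤ 2 / n := by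
    have h := intervalIntegral.norm_integral_le_of_norm_le_const (f := fun x => u x - m x)
      (a := (p : ℝ) / n) (b := q) (C := 2) (fun x _ => hhb x)
    refine h.trans ?_
    have f1 : (p : ℝ) ≤ n * q := Nat.floor_le (by positivity)
    have f2 : n * q < p + 1 := Nat.lt_floor_add_one _
    have f3 : (p : ℝ) / n ≤ q := by rw [div_le_iff₀ hn']; linarith
    rw [abs_of_nonneg (by linarith)]
    rw [le_div_iff₀ hn']
    have : (q - (p : ℝ) / n) * n = n * q - p := by field_simp
    nlinarith
  rw [← intervalIntegral.integral_add_adjacent_intervals (hi 0 ((p : ℝ) / n)) (hi _ q), e1]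
  simp_rw [e2]
  rw [← Finset.sum_div]
  refine (abs_add_le _ _).trans ?_
  rw [abs_div, abs_of_pos hn']
  gcongr

lemma exists_step {ν : ℝ → Measure ℝ} (hν : IsYoungMeasure ν) {n : ℕ} (hn : 0 < n) :
    ∃ u : ℝ → ℝ, IsStepFun n u ∧ Measurable u ∧ (∀ x, u x ∈ Set.Icc (-1 : ℝ) 1) ∧
      ∀ k < n, ∀ q ∈ Set.Icc (0 : ℝ) 1, |∫ x in (0 : ℝ)..q, (u x ^ k - mom ν k x)| ≤
        Real.sqrt (2 ^ k * 8 / n) + 2 / n := by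
  have hn' : (0 : ℝ) < n := by exact_mod_cast hn
  have hle : ∀ i : ℕ, (i : ℝ) / n ≤ ((i : ℝ) + 1) / n := fun i => by gcongr; linarith
  have hlen : ∀ i : ℕ, ((i : ℝ) + 1) / n - (i : ℝ) / n = 1 / n := fun i => by ring
  have hii : ∀ k a b, IntervalIntegrable (mom ν k) volume a b := fun k =>
    bdd_intervalIntegrable (mom_B1 hν k).1 (mom_B1 hν k).2
  let M : ℕ → ℕ → ℝ := fun i k => n * ∫ x in ((i : ℝ) / n)..(((i : ℝ) + 1) / n), mom ν k x
  obtain ⟨t, ht, hp⟩ := greedy n M (fun i k => by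
      have h := intervalIntegral.norm_integral_le_of_norm_le_const (f := mom ν k)
        (a := (i : ℝ) / n) (b := ((i : ℝ) + 1) / n) (C := 1) (fun x _ => (mom_B1 hν k).2 x)
      rw [hlen, abs_of_pos (by positivity), Real.norm_eq_abs] at h
      simp only [M]
      rw [abs_mul, abs_of_pos hn']
      calc _ ≤ (n : ℝ) * (1 * (1 / n)) := by gcongr
        _ = 1 := by field_simp)
    (fun i a => by
      have hc : Continuous (fun t : ℝ => ∑ k ∈ Finset.range n, a k * t ^ k) := by fun_prop
      obtain ⟨s, hs, hmin⟩ := isCompact_Icc.exists_isMinOn (s := Set.Icc (-1 : ℝ) 1)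
        ⟨0, by norm_num, by norm_num⟩ hc.continuousOn
      refine ⟨s, hs, ?_⟩
      set φ := ∑ k ∈ Finset.range n, a k * s ^ k
      have hpt : ∀ x, φ ≤ ∑ k ∈ Finset.range n, a k * mom ν k x := by
        intro x
        have := hν.2 x
        have e : ∑ k ∈ Finset.range n, a k * mom ν k x =
            ∫ t, ∑ k ∈ Finset.range n, a k * clip t ^ k ∂(ν x) := by
          rw [integral_finsetSum]
          · simp_rw [integral_const_mul]; rfl
          · intro k _
            exact (clip_integrable (ν x) (continuous_pow k)).const_mul _
        rw [e]
        calc φ = ∫ _, φ ∂(ν x) := by simp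
          _ ≤ _ := integral_mono (integrable_const _) (clip_integrable (ν x) hc)
            (fun t => hmin (clip_mem t))
      have e2 : ∑ k ∈ Finset.range n, a k * M i k =
          n * ∫ x in ((i : ℝ) / n)..(((i : ℝ) + 1) / n),
            ∑ k ∈ Finset.range n, a k * mom ν k x := by
        rw [intervalIntegral.integral_finsetSum (fun k _ => (hii k _ _).const_mul _),
          Finset.mul_sum]
        refine Finset.sum_congr rfl fun k _ => ?_
        rw [intervalIntegral.integral_const_mul]; simp only [M]; ring
      rw [e2]
      have h := intervalIntegral.integral_mono (μ := volume) (hle i)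
        (f := fun _ => φ) (g := fun x => ∑ k ∈ Finset.range n, a k * mom ν k x) (by simp)
        (by
          have := IntervalIntegrable.sum (μ := volume) (a := (i : ℝ) / n)
            (b := ((i : ℝ) + 1) / n) (Finset.range n) (f := fun k x => a k * mom ν k x)
            (fun k _ => (hii k _ _).const_mul (a k))
          have e : (fun x => ∑ k ∈ Finset.range n, a k * mom ν k x) =
              ∑ k ∈ Finset.range n, fun x => a k * mom ν k x := by ext x; simp
          rw [e]; exact this) hpt
      rw [intervalIntegral.integral_const, hlen, smul_eq_mul] at h
      calc φ = n * (1 / n * φ) := by field_simp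
        _ ≤ _ := by gcongr)
  refine ⟨fun x => t (stepIdx n x), ?_, ?_, fun x => ht _, ?_⟩
  · intro i x hx y hy
    simp only
    rw [stepIdx_eq hn i hx, stepIdx_eq hn i hy]
  · exact (measurable_from_top (f := t)).comp (measurable_stepIdx n)
  · intro k hk q hq
    have hu : B1 (fun x => t (stepIdx n x) ^ k) :=
      ⟨((measurable_from_top (f := t)).comp (measurable_stepIdx n)).pow_const k,
        fun x => abs_pow_le_of_mem (ht _) k⟩
    have h := segment_bound hn (mom_B1 hν k) hu (fun i => t i ^ k)
      (fun i x hx => by rw [stepIdx_eq hn i hx]) hq.1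
    refine h.trans ?_
    gcongr
    set p := ⌊n * q⌋₊
    have hpn : (p : ℝ) ≤ n :=
      (Nat.floor_le (mul_nonneg hn'.le hq.1)).trans (by nlinarith [hq.2])
    have h1 := hp p
    have h2 := Finset.single_le_sum (f := fun k => (1 / 2 : ℝ) ^ k *
        (∑ i ∈ Finset.range p, (t i ^ k - M i k)) ^ 2) (fun k _ => by positivity)
        (Finset.mem_range.2 hk)
    have h3 : (1 / 2 : ℝ) ^ k * (∑ i ∈ Finset.range p, (t i ^ k - M i k)) ^ 2 ≤ 8 * n := by
      linarith
    apply Real.le_sqrt_of_sq_le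
    rw [div_pow, sq_abs, div_le_div_iff₀ (by positivity) hn']
    change (∑ i ∈ Finset.range p, (t i ^ k - M i k)) ^ 2 * n ≤ _
    have h4 : (∑ i ∈ Finset.range p, (t i ^ k - M i k)) ^ 2 ≤ 2 ^ k * (8 * n) := by
      calc _ = 2 ^ k * ((1 / 2 : ℝ) ^ k * (∑ i ∈ Finset.range p, (t i ^ k - M i k)) ^ 2) := by
            rw [← mul_assoc, ← mul_pow]; norm_num
        _ ≤ _ := by gcongr
    nlinarith

/-! ### Weak-star convergence from initial segments -/

lemma weakstar_of_segments {h : ℕ → ℝ → ℝ} (hm : ∀ n, Measurable (h n))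
    (hb : ∀ n x, |h n x| ≤ 2)
    (hpre : ∀ q ∈ Set.Icc (0 : ℝ) 1,
      Tendsto (fun n => ∫ x in (0 : ℝ)..q, h n x) atTop (nhds 0))
    {g : ℝ → ℝ} (hg : Integrable g mu01) :
    Tendsto (fun n => ∫ x in I01, g x * h n x) atTop (nhds 0) := by
  have hint : ∀ n, Integrable (h n) mu01 := fun n =>
    Integrable.of_bound (hm n).aestronglyMeasurable 2 (ae_of_all _ (hb n))
  have hgint : ∀ n (g : ℝ → ℝ), Integrable g mu01 → Integrable (fun x => g x * h n x) mu01 :=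
    fun n g hg => hg.mul_bdd (hm n).aestronglyMeasurable (ae_of_all _ (hb n))
  have hall : Tendsto (fun n => ∫ x in I01, h n x) atTop (nhds 0) := by
    refine (hpre 1 (by simp)).congr fun n => ?_
    rw [intervalIntegral.integral_of_le zero_le_one, integral_Ioc_eq_integral_Ioo]; rfl
  -- sets
  have hset : ∀ s : Set ℝ, MeasurableSet s →
      Tendsto (fun n => ∫ x in s, h n x ∂mu01) atTop (nhds 0) := by
    intro s hs
    induction s, hs using MeasurableSpace.induction_on_inter
      ((BorelSpace.measurable_eq (α := ℝ)).trans (borel_eq_generateFrom_Iic ℝ)) isPiSystem_Iic with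
    | empty => simp
    | basic s hs =>
      obtain ⟨a, rfl⟩ := hs
      rw [Measure.restrict_restrict measurableSet_Iic]
      rcases le_or_gt 1 a with ha | ha
      · have : Set.Iic a ∩ I01 = I01 := by
          ext x; simp only [I01, Set.mem_inter_iff, Set.mem_Iic, Set.mem_Ioo]
          constructor
          · exact fun h => h.2
          · exact fun h => ⟨by linarith [h.2], h⟩
        rw [this]; exact hall
      · have : Set.Iic a ∩ I01 = Set.Ioc 0 (max 0 a) := by
          ext x; simp only [I01, Set.mem_inter_iff, Set.mem_Iic, Set.mem_Ioo, Set.mem_Ioc, le_max_iff]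
          constructor
          · exact fun h => ⟨h.2.1, Or.inr h.1⟩
          · rintro ⟨h1, h2 | h2⟩
            · linarith
            · exact ⟨h2, h1, by linarith⟩
        rw [this]
        refine (hpre (max 0 a) ⟨le_max_left _ _, max_le zero_le_one ha.le⟩).congr fun n => ?_
        rw [intervalIntegral.integral_of_le (le_max_left _ _)]
    | compl s hs ih =>
      have := hall.sub ih
      rw [sub_zero] at this
      refine this.congr fun n => ?_
      rw [← integral_add_compl hs (hint n)]; ring
    | iUnion f hd hf ih =>
      have e : ∀ n, ∫ x in ⋃ i, f i, h n x ∂mu01 = ∑' i, ∫ x in f i, h n x ∂mu01 := fun n =>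
        integral_iUnion hf hd (hint n).integrableOn
      simp_rw [e]
      have hsum : Summable (fun i => 2 * mu01.real (f i)) := by
        refine Summable.mul_left _ ?_
        have : ∑' i, mu01 (f i) ≠ ⊤ := by
          rw [← measure_iUnion hd hf]; exact measure_ne_top _ _
        exact ENNReal.summable_toReal this
      have := tendsto_tsum_of_dominated_convergence (𝓕 := atTop)
        (f := fun n i => ∫ x in f i, h n x ∂mu01) (g := fun _ => (0:ℝ)) hsum ih
        (Eventually.of_forall fun n i =>
          norm_setIntegral_le_of_norm_le_const (measure_lt_top _ _) (fun x _ => hb n x))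
      simpa using this
  refine Integrable.induction
    (P := fun g => Tendsto (fun n => ∫ x in I01, g x * h n x) atTop (nhds 0)) ?_ ?_ ?_ ?_ hg
  · intro c s hs _
    have := (hset s hs).const_mul c
    rw [mul_zero] at this
    refine this.congr fun n => ?_
    rw [← integral_const_mul, ← integral_indicator hs]
    congr 1; ext x
    by_cases hx : x ∈ s <;> simp [hx]
  · intro f g _ hf hg h1 h2
    have := h1.add h2
    rw [add_zero] at this
    refine this.congr fun n => ?_
    rw [← integral_add (hgint n f hf) (hgint n g hg)]
    congr 1; ext x; simp only [Pi.add_apply]; ring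
  · refine isClosed_of_closure_subset fun f hf => ?_
    rw [Metric.mem_closure_iff] at hf
    change Tendsto (fun n => ∫ x in I01, f x * h n x) atTop (nhds 0)
    rw [Metric.tendsto_atTop]
    intro ε hε
    obtain ⟨b, hbP, hbd⟩ := hf (ε / 4) (by positivity)
    change Tendsto (fun n => ∫ x in I01, b x * h n x) atTop (nhds 0) at hbP
    obtain ⟨N, hN⟩ := Metric.tendsto_atTop.1 hbP (ε / 2) (by positivity)
    refine ⟨N, fun n hn => ?_⟩
    have h1 := hN n hn
    rw [Real.dist_eq, sub_zero] at h1 ⊢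
    have hfi := L1.integrable_coeFn f
    have hbi := L1.integrable_coeFn b
    have hdi : Integrable (fun x => f x - b x) mu01 := hfi.sub hbi
    have hdist : ∫ x in I01, |f x - b x| = dist f b := by
      rw [dist_eq_norm, L1.norm_eq_integral_norm]
      refine integral_congr_ae ?_
      filter_upwards [Lp.coeFn_sub f b] with x hx
      rw [hx]; rfl
    have h2 : |∫ x in I01, (f x - b x) * h n x| ≤ 2 * dist f b := by
      rw [← hdist, ← integral_const_mul]
      refine abs_integral_le_integral_abs.trans ?_
      refine integral_mono (hgint n _ hdi).abs (hdi.abs.const_mul 2) fun x => ?_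
      simp only [abs_mul]
      nlinarith [hb n x, abs_nonneg (f x - b x)]
    have h3 : ∫ x in I01, f x * h n x =
        (∫ x in I01, (f x - b x) * h n x) + ∫ x in I01, b x * h n x := by
      rw [← integral_add (hgint n _ hdi) (hgint n _ hbi)]
      congr 1; ext x; ring
    rw [h3]
    have := abs_add_le (∫ x in I01, (f x - b x) * h n x) (∫ x in I01, b x * h n x)
    linarith
  · intro f g hfg _ hP
    refine hP.congr fun n => ?_
    refine integral_congr_ae ?_
    filter_upwards [hfg] with x hx
    rw [hx]

/-- Convergence of all moments implies narrow convergence. -/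
lemma narrow_of_moments {ν : ℝ → Measure ℝ} (hν : IsYoungMeasure ν)
    (hs : ∀ᵐ x ∂mu01, ν x (Set.Icc (-1 : ℝ) 1) = 1)
    {u : ℕ → ℝ → ℝ} (hu : ∀ n, Measurable (u n)) (hu1 : ∀ n x, u n x ∈ Set.Icc (-1 : ℝ) 1)
    (hmom : ∀ (k : ℕ) (g : ℝ → ℝ), Integrable g mu01 →
      Tendsto (fun n => ∫ x in I01, g x * (u n x ^ k - mom ν k x)) atTop (nhds 0)) :
    NarrowConv (fun n => deltaYM (u n)) ν := by
  intro f hf _ g hg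
  change Integrable g mu01 at hg
  -- error functional
  let J : (ℝ → ℝ) → ℕ → ℝ := fun f n =>
    ∫ x in I01, g x * (f (u n x) - ∫ s, f (clip s) ∂(ν x))
  have hbound : ∀ f : ℝ → ℝ, ∀ C, (∀ s ∈ Set.Icc (-1 : ℝ) 1, |f s| ≤ C) → ∀ x,
      |∫ s, f (clip s) ∂(ν x)| ≤ C := by
    intro f C hC x
    have := hν.2 x
    have h := norm_integral_le_of_norm_le_const (μ := ν x) (f := fun t => f (clip t)) (C := C)
      (ae_of_all _ fun t => hC _ (clip_mem t))
    simpa using h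
  have hint1 : ∀ f : ℝ → ℝ, Continuous f → ∀ n, Integrable (fun x => g x * f (u n x)) mu01 := by
    intro f hf n
    obtain ⟨C, hC⟩ := isCompact_Icc.exists_bound_of_continuousOn (s := Set.Icc (-1:ℝ) 1)
      hf.continuousOn
    exact hg.mul_bdd (hf.measurable.comp (hu n)).aestronglyMeasurable
      (ae_of_all _ fun x => hC _ (hu1 n x))
  have hint2 : ∀ f : ℝ → ℝ, Continuous f →
      Integrable (fun x => g x * ∫ s, f (clip s) ∂(ν x)) mu01 := by
    intro f hf
    obtain ⟨C, hC⟩ := isCompact_Icc.exists_bound_of_continuousOn (s := Set.Icc (-1:ℝ) 1)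
      hf.continuousOn
    exact hg.mul_bdd (measurable_int hν (hf.comp clip_cont)).aestronglyMeasurable
      (ae_of_all _ (hbound f C hC))
  have hint : ∀ f : ℝ → ℝ, Continuous f → ∀ n,
      Integrable (fun x => g x * (f (u n x) - ∫ s, f (clip s) ∂(ν x))) mu01 := by
    intro f hf n
    simp_rw [mul_sub]
    exact (hint1 f hf n).sub (hint2 f hf)
  have hJadd : ∀ f₁ f₂ : ℝ → ℝ, Continuous f₁ → Continuous f₂ → ∀ n,
      J (fun t => f₁ t + f₂ t) n = J f₁ n + J f₂ n := by
    intro f₁ f₂ h₁ h₂ n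
    simp only [J]
    rw [← integral_add (hint f₁ h₁ n) (hint f₂ h₂ n)]
    congr 1; ext x
    have := hν.2 x
    rw [integral_add (clip_integrable (ν x) h₁) (clip_integrable (ν x) h₂)]
    ring
  have hpoly : ∀ P : Polynomial ℝ, Tendsto (J (fun t => P.eval t)) atTop (nhds 0) := by
    intro P
    induction P using Polynomial.induction_on' with
    | add p q hp hq =>
      have := hp.add hq
      rw [add_zero] at this
      refine this.congr fun n => ?_
      rw [← hJadd _ _ p.continuous q.continuous n]
      simp only [Polynomial.eval_add]
    | monomial k a =>
      have := (hmom k g hg).const_mul a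
      rw [mul_zero] at this
      refine this.congr fun n => ?_
      simp only [J, Polynomial.eval_monomial, integral_const_mul]
      rw [← integral_const_mul]
      congr 1; ext x
      simp only [mom]; ring
  have hJ : Tendsto (J f) atTop (nhds 0) := by
    rw [Metric.tendsto_atTop]
    intro ε hε
    have hG : 0 ≤ ∫ x in I01, |g x| := integral_nonneg fun x => abs_nonneg _
    set G := ∫ x in I01, |g x| with hGdef
    set η := ε / (4 * (G + 1)) with hη
    have hηp : 0 < η := by positivity
    obtain ⟨P, hP⟩ := exists_polynomial_near_of_continuousOn (-1) 1 f hf.continuousOn η hηp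
    obtain ⟨N, hN⟩ := Metric.tendsto_atTop.1 (hpoly P) (ε / 2) (by positivity)
    refine ⟨N, fun n hn => ?_⟩
    have h1 := hN n hn
    rw [Real.dist_eq, sub_zero] at h1 ⊢
    have hd : Continuous (fun t => f t - P.eval t) := hf.sub P.continuous
    have e : J f n = J (fun t => P.eval t) n + J (fun t => f t - P.eval t) n := by
      rw [← hJadd _ _ P.continuous hd]
      simp only [add_sub_cancel]
    have hb : ∀ s ∈ Set.Icc (-1 : ℝ) 1, |f s - P.eval s| ≤ η := fun s hs => by
      rw [abs_sub_comm]; exact (hP s hs).le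
    have h2 : |J (fun t => f t - P.eval t) n| ≤ (2 * η) * G := by
      rw [hGdef, ← integral_const_mul]
      refine abs_integral_le_integral_abs.trans ?_
      refine integral_mono (hint _ hd n).abs (hg.abs.const_mul _) fun x => ?_
      simp only [abs_mul]
      rw [mul_comm]
      gcongr
      have a1 := hb _ (hu1 n x)
      have a2 := hbound _ η hb x
      refine (abs_sub _ _).trans ?_
      linarith
    have h3 : (2 * η) * G < ε / 2 := by
      have : η * (4 * (G + 1)) = ε := by rw [hη]; field_simp
      nlinarith
    rw [e]
    have := abs_add_le (J (fun t => P.eval t) n) (J (fun t => f t - P.eval t) n)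
    linarith
  have hlim : ∫ x in I01, g x * ∫ t, f t ∂(ν x) = ∫ x in I01, g x * ∫ t, f (clip t) ∂(ν x) := by
    refine integral_congr_ae ?_
    filter_upwards [hs] with x hx
    have := hν.2 x
    congr 1
    refine integral_congr_ae ?_
    filter_upwards [ae_clip hx] with t ht
    rw [ht]
  rw [hlim]
  have := hJ.add_const (∫ x in I01, g x * ∫ t, f (clip t) ∂(ν x))
  rw [zero_add] at this
  refine this.congr fun n => ?_
  simp only [J, deltaYM, integral_dirac]
  rw [← integral_add (hint f hf n) (hint2 f hf)]
  congr 1; ext x; ring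

lemma exists_recovery (ν : YMb) : ∃ u : ℕ → ℝ → ℝ, (∀ n, IsStepFun n (u n)) ∧
    (∀ n, Measurable (u n)) ∧ (∀ n x, u n x ∈ Set.Icc (-1 : ℝ) 1) ∧
    NarrowConv (fun n => deltaYM (u n)) ν.1 := by
  obtain ⟨ν, hν, hs⟩ := ν
  have hex : ∀ n : ℕ, ∃ u : ℝ → ℝ, IsStepFun n u ∧ Measurable u ∧
      (∀ x, u x ∈ Set.Icc (-1 : ℝ) 1) ∧
      (0 < n → ∀ k < n, ∀ q ∈ Set.Icc (0 : ℝ) 1, |∫ x in (0 : ℝ)..q, (u x ^ k - mom ν k x)| ≤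
        Real.sqrt (2 ^ k * 8 / n) + 2 / n) := by
    intro n
    rcases Nat.eq_zero_or_pos n with rfl | hn
    · exact ⟨fun _ => 0, fun i => i.elim0, measurable_const, fun _ => by simp, fun h => by omega⟩
    · obtain ⟨u, h1, h2, h3, h4⟩ := exists_step hν hn
      exact ⟨u, h1, h2, h3, fun _ => h4⟩
  choose u h1 h2 h3 h4 using hex
  refine ⟨u, h1, h2, h3, narrow_of_moments hν hs h2 h3 fun k g hg => ?_⟩
  refine weakstar_of_segments (fun n => ((h2 n).pow_const k).sub (mom_B1 hν k).1) (fun n x => ?_)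
    (fun q hq => ?_) hg
  · have a1 := abs_pow_le_of_mem (h3 n x) k
    have a2 := (mom_B1 hν k).2 x
    exact (abs_sub _ _).trans (by linarith)
  · have hlim : Tendsto (fun n : ℕ => Real.sqrt (2 ^ k * 8 / n) + 2 / n) atTop (nhds 0) := by
      have t1 := tendsto_const_div_atTop_nhds_zero_nat (2 ^ k * 8 : ℝ)
      have t2 := tendsto_const_div_atTop_nhds_zero_nat (2 : ℝ)
      have := ((Real.continuous_sqrt.tendsto 0).comp t1).add t2
      simpa using this
    refine squeeze_zero_norm' ?_ hlim
    filter_upwards [eventually_gt_atTop k] with n hn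
    exact h4 n (by omega) k hn q hq

/-- Γ-convergence of the graph Dirichlet energies to the graphon Dirichlet energy. -/
theorem graphDirichlet_gammaConv_graphonDirichlet
    (Wseq : ℕ → ℝ → ℝ → ℝ)
    (hstep : ∀ n, ∃ A : Fin n → Fin n → ℝ, (∀ i j, A i j = A j i) ∧
      (∀ i j, 0 ≤ A i j) ∧ Wseq n = stepGraphon n A)
    (hWseqBd : ∃ C : ℝ, ∀ n, (∫ x in I01, ∫ y in I01, |Wseq n x y|) ≤ C)
    (W : ℝ → ℝ → ℝ) (hWmeas : Measurable (Function.uncurry W))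
    (hWnonneg : ∀ x y, 0 ≤ W x y) (hWsymm : ∀ x y, W x y = W y x)
    (hWint : IntegrableOn (Function.uncurry W) (I01 ×ˢ I01))
    (hcut : Tendsto (fun n => cutNorm (fun x y => Wseq n x y - W x y)) atTop (nhds 0)) :
    GammaConv (fun (νs : ℕ → YMb) (ν : YMb) => NarrowConv (fun n => (νs n).1) ν.1)
      (fun n ν => graphDirichletFn n (Wseq n) ν.1)
      (fun ν => ((graphonDirichlet W ν.1 : ℝ) : EReal)) := by
  have hW : Integrable (Function.uncurry W) (mu01.prod mu01) := by
    rw [Measure.prod_restrict]; exact hWint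
  have hWn : ∀ n, Integrable (Function.uncurry (Wseq n)) (mu01.prod mu01) := by
    intro n
    obtain ⟨A, _, _, h⟩ := hstep n
    rw [h]; exact stepGraphon_integrable n A
  have hconv : ∀ (νs : ℕ → YMb) (ν : YMb), NarrowConv (fun n => (νs n).1) ν.1 →
      Tendsto (fun n => Quad W (mom (νs n).1 1) (mom (νs n).1 2)) atTop
        (nhds (graphonDirichlet W ν.1)) := by
    intro νs ν h
    rw [dirichlet_eq hW ν]
    have hmom : ∀ k : ℕ, ∀ g : ℝ → ℝ, Integrable g mu01 →
        Tendsto (fun n => ∫ x in I01, g x * mom (νs n).1 k x) atTop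
          (nhds (∫ x in I01, g x * mom ν.1 k x)) := fun k g hg =>
      h (fun t => clip t ^ k) (clip_cont.pow k)
        ⟨1, fun t => abs_pow_le_of_mem (clip_mem t) k⟩ g hg
    exact quad_tendsto hWmeas hW (mom_B1 ν.2.1 1) (mom_B1 ν.2.1 2)
      (fun n => mom_B1 (νs n).2.1 1) (fun n => mom_B1 (νs n).2.1 2) (hmom 1) (hmom 2)
  have hcut4 : Tendsto (fun n => 4 * cutNorm (fun x y => Wseq n x y - W x y)) atTop (nhds 0) := by
    simpa using hcut.const_mul 4
  constructor
  · intro νs ν h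
    have h1 := (hconv νs ν h).sub hcut4
    rw [sub_zero] at h1
    have h2 := (continuous_coe_real_ereal.tendsto _).comp h1
    refine h2.liminf_eq.ge.trans ?_
    refine Filter.liminf_le_liminf (Eventually.of_forall fun n => ?_)
    simp only [Function.comp]
    by_cases hex : ∃ u : ℝ → ℝ, IsStepFun n u ∧ Measurable u ∧
      (∀ x, u x ∈ Set.Icc (-1 : ℝ) 1) ∧ (νs n).1 = deltaYM u
    · obtain ⟨u, hs, hu, hu1, he⟩ := hex
      rw [he, graphDirichletFn_delta (hWn n) hs hu hu1]
      have := quad_sub_le (hWn n) hW (mom_B1 (deltaYM_young hu) 1) (mom_B1 (deltaYM_young hu) 2)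
      rw [EReal.coe_le_coe_iff]
      have := (abs_le.1 this).1
      linarith
    · unfold graphDirichletFn
      rw [dif_neg hex]
      exact le_top
  · intro ν
    obtain ⟨u, hs, hu, hu1, hn⟩ := exists_recovery ν
    let νs : ℕ → YMb := fun n => ⟨deltaYM (u n), deltaYM_young (hu n), ae_of_all _ fun x => by
      simp only [deltaYM]
      rw [Measure.dirac_apply' _ measurableSet_Icc, Set.indicator_of_mem (hu1 n x)]; rfl⟩
    refine ⟨νs, hn, ?_⟩
    have h1 := (hconv νs ν hn).add hcut4
    rw [add_zero] at h1
    have h2 := (continuous_coe_real_ereal.tendsto _).comp h1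
    refine le_trans ?_ h2.limsup_eq.le
    refine Filter.limsup_le_limsup (Eventually.of_forall fun n => ?_)
    simp only [Function.comp, νs]
    rw [graphDirichletFn_delta (hWn n) (hs n) (hu n) (hu1 n)]
    have := quad_sub_le (hWn n) hW (mom_B1 (deltaYM_young (hu n)) 1)
      (mom_B1 (deltaYM_young (hu n)) 2)
    rw [EReal.coe_le_coe_iff]
    have := (abs_le.1 this).2
    linarith
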